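/- arXiv:1806.07948 — 2 statements merged into one kernel-verified Lean document; each statement's English description precedes it below -/
import Mathlib

section
/- ψ(4/5) = −γ + (π/2)·√(1 + 2/√5) − (5/4)·ln 5 − (√5/4)·ln((3 + √5)/2), where ψ is the digamma function and γ is the Euler–Mascheroni constant. (This is the corrected form of Jensen's erroneous formula for ψ(4/5).) -/
noncomputable def digamma (x : ℝ) : ℝ := deriv Real.Gamma x / Real.Gamma x

open Real Set Filter Topology in
lemma digamma_lim (x : ℝ) (hx : 0 < x) (hx1 : x ≤ 1) :
    Tendsto (fun n : ℕ => ∑ k ∈ Finset.range n, (1 / (x + k) - 1 / ((k : ℝ) + 1))) atTop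
      (𝓝 (-(digamma x + Real.eulerMascheroniConstant))) := by
  let f := log ∘ Gamma
  have hc : ConvexOn ℝ (Ioi 0) f := convexOn_log_Gamma
  have h_rec (x : ℝ) (hx : 0 < x) : f (x + 1) = f x + log x := by
    simp only [f, Function.comp_apply,
      Gamma_add_one hx.ne', log_mul hx.ne' (Gamma_pos_of_pos hx).ne', add_comm]
  have hdG {x : ℝ} (hx : 0 < x) : DifferentiableAt ℝ Gamma x :=
    differentiableAt_Gamma (fun m ↦ ne_of_gt (by linarith [(Nat.cast_nonneg m : (0:ℝ) ≤ m)]))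
  have hder {x : ℝ} (hx : 0 < x) : DifferentiableAt ℝ f x :=
    (hdG hx).log (Gamma_pos_of_pos hx).ne'
  have hdig {x : ℝ} (hx : 0 < x) : deriv f x = digamma x := by
    simp only [f, Function.comp_def]
    rw [deriv.log (hdG hx) (Gamma_pos_of_pos hx).ne']
    rfl
  have hder_rec (x : ℝ) (hx : 0 < x) : deriv f (x + 1) = deriv f x + 1 / x := by
    rw [← deriv_comp_add_const, one_div, ← deriv_log,
      ← deriv_add (hder <| by positivity) (differentiableAt_log hx.ne')]
    apply EventuallyEq.deriv_eq
    filter_upwards [eventually_gt_nhds hx] using h_rec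
  have hsum (x : ℝ) (hx : 0 < x) (n : ℕ) :
      deriv f (x + n) = deriv f x + ∑ k ∈ Finset.range n, 1 / (x + k) := by
    induction n with
    | zero => simp
    | succ n ih =>
      rw [Finset.sum_range_succ, ← add_assoc, ← ih, ← hder_rec (x + n) (by positivity)]
      push_cast; ring_nf
  have hmono : MonotoneOn (deriv f) (Ioi 0) :=
    hc.monotoneOn_deriv (fun x hx => hder hx)
  have h1 : deriv f 1 = -Real.eulerMascheroniConstant := by
    rw [hdig one_pos, digamma, Real.Gamma_one, Real.eulerMascheroniConstant_eq_neg_deriv]; simp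
  have key (n : ℕ) : ∑ k ∈ Finset.range n, (1 / (x + k) - 1 / ((k : ℝ) + 1)) =
      -(digamma x + Real.eulerMascheroniConstant) + (deriv f (x + n) - deriv f (1 + n)) := by
    rw [hsum x hx, hsum 1 one_pos, h1, hdig hx, Finset.sum_sub_distrib]
    simp only [add_comm (1:ℝ)]
    ring
  simp_rw [key]
  have : Tendsto (fun n : ℕ => deriv f (x + n) - deriv f (1 + n)) atTop (𝓝 0) := by
    refine tendsto_of_tendsto_of_tendsto_of_le_of_le' (g := fun n : ℕ => -(1 / (n:ℝ)))
      (h := fun _ => 0) ?_ tendsto_const_nhds ?_ ?_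
    · simpa using (tendsto_one_div_atTop_nhds_zero_nat (𝕜 := ℝ)).neg
    · filter_upwards [eventually_gt_atTop 0] with n hn
      have hn' : (0:ℝ) < n := by exact_mod_cast hn
      have := hder_rec n hn'
      have h2 := hmono (a := (n:ℝ)) (b := x + n) hn' (by simp; positivity) (by linarith)
      rw [add_comm 1 (n:ℝ), this]
      linarith
    · filter_upwards with n
      have h2 := hmono (a := x + n) (b := 1 + n) (by simp; positivity) (by simp; positivity)
        (by linarith)
      linarith
  simpa using this.const_add (-(digamma x + Real.eulerMascheroniConstant))

noncomputable def Phi5 (u : ℝ) : ℝ := 1 + u + u ^ 2 + u ^ 3 + u ^ 4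

lemma Phi5_pos (u : ℝ) : 0 < Phi5 u := by
  unfold Phi5
  nlinarith [sq_nonneg (u ^ 2 + u / 2), sq_nonneg (u + 2 / 3), sq_nonneg (u)]

lemma Phi5_cont : Continuous Phi5 := by unfold Phi5; fun_prop

lemma J_cont (n : ℕ) : Continuous (fun u : ℝ => 5 * u ^ n / Phi5 u) :=
  (by fun_prop : Continuous (fun u : ℝ => 5 * u ^ n)).div₀ Phi5_cont (fun u => (Phi5_pos u).ne')

lemma sum_eq (n : ℕ) :
    ∑ k ∈ Finset.range n, (1 / ((4 / 5 : ℝ) + k) - 1 / ((k : ℝ) + 1)) =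
      (∫ u in (0:ℝ)..1, 5 * u ^ 3 / Phi5 u) - ∫ u in (0:ℝ)..1, 5 * u ^ (5 * n + 3) / Phi5 u := by
  induction n with
  | zero => simp
  | succ n ih =>
    rw [Finset.sum_range_succ, ih]
    have : (∫ u in (0:ℝ)..1, 5 * u ^ (5 * n + 3) / Phi5 u)
        - (∫ u in (0:ℝ)..1, 5 * u ^ (5 * (n + 1) + 3) / Phi5 u)
        = 1 / ((4 / 5 : ℝ) + n) - 1 / ((n : ℝ) + 1) := by
      rw [← intervalIntegral.integral_sub ((J_cont _).intervalIntegrable _ _)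
        ((J_cont _).intervalIntegrable _ _)]
      have e : ∀ u : ℝ, 5 * u ^ (5 * n + 3) / Phi5 u - 5 * u ^ (5 * (n + 1) + 3) / Phi5 u
          = 5 * u ^ (5 * n + 3) - 5 * u ^ (5 * n + 4) := by
        intro u
        rw [← sub_div, div_eq_iff (Phi5_pos u).ne', Phi5]
        ring
      simp_rw [e]
      rw [intervalIntegral.integral_sub (Continuous.intervalIntegrable (by fun_prop) _ _)
        (Continuous.intervalIntegrable (by fun_prop) _ _), intervalIntegral.integral_const_mul,
        intervalIntegral.integral_const_mul, integral_pow, integral_pow]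
      push_cast
      simp
      field_simp
      ring
    linarith

open Filter Topology in
lemma J_tendsto : Tendsto (fun n : ℕ => ∫ u in (0:ℝ)..1, 5 * u ^ (5 * n + 3) / Phi5 u) atTop
    (𝓝 0) := by
  refine squeeze_zero (g := fun n : ℕ => 5 * (1 / ((n:ℝ) + 1))) (fun n => ?_) (fun n => ?_) ?_
  · apply intervalIntegral.integral_nonneg zero_le_one
    intro u hu
    have := hu.1
    have := Phi5_pos u
    positivity
  · calc _ ≤ ∫ u in (0:ℝ)..1, 5 * u ^ n := by
          apply intervalIntegral.integral_mono_on zero_le_one ((J_cont _).intervalIntegrable _ _)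
            (Continuous.intervalIntegrable (by fun_prop) _ _)
          intro u hu
          have h0 := hu.1
          have h1 : 1 ≤ Phi5 u := by
            unfold Phi5
            have : 0 ≤ u + u ^ 2 + u ^ 3 + u ^ 4 := by positivity
            linarith
          have h2 : u ^ (5 * n + 3) ≤ u ^ n := pow_le_pow_of_le_one h0 hu.2 (by omega)
          calc _ ≤ 5 * u ^ (5 * n + 3) := div_le_self (by positivity) h1
            _ ≤ _ := by linarith
      _ = _ := by
        rw [intervalIntegral.integral_const_mul, integral_pow]; simp
  · simpa using (tendsto_one_div_add_atTop_nhds_zero_nat (𝕜 := ℝ)).const_mul 5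

open Real in
lemma quad_pos {t : ℝ} (h0 : 0 < t) (h1 : t < π) (u : ℝ) : 0 < u ^ 2 + 2 * cos t * u + 1 := by
  have hs := sin_pos_of_pos_of_lt_pi h0 h1
  nlinarith [sin_sq_add_cos_sq t, sq_nonneg (u + cos t), sq_nonneg (sin t)]

open Real in
lemma quad_int {t : ℝ} (h0 : 0 < t) (h1 : t < π) (A B : ℝ) :
    ∫ u in (0:ℝ)..1, (A * (2 * u + 2 * cos t) + B) / (u ^ 2 + 2 * cos t * u + 1)
      = A * log (2 + 2 * cos t) + B * (t / 2) / sin t := by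
  have hs := sin_pos_of_pos_of_lt_pi h0 h1
  have hsc := sin_sq_add_cos_sq t
  have hcl : -1 < cos t := by nlinarith [neg_one_le_cos t, cos_le_one t]
  have hd : ∀ u ∈ Set.uIcc (0:ℝ) 1, HasDerivAt
      (fun u => A * log (u ^ 2 + 2 * cos t * u + 1)
        + B / sin t * arctan (u * sin t / (1 + u * cos t)))
      ((A * (2 * u + 2 * cos t) + B) / (u ^ 2 + 2 * cos t * u + 1)) u := by
    intro u hu
    rw [Set.uIcc_of_le zero_le_one] at hu
    have hq := quad_pos h0 h1 u
    have hp : 0 < 1 + u * cos t := by nlinarith [hu.1, hu.2]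
    have d1 : HasDerivAt (fun u : ℝ => u ^ 2 + 2 * cos t * u + 1) (2 * u + 2 * cos t) u := by
      have := (((hasDerivAt_id u).pow 2).add ((hasDerivAt_id u).const_mul (2 * cos t))).add_const 1
      refine HasDerivAt.congr_deriv this ?_
      simp
    have d2 : HasDerivAt (fun u : ℝ => u * sin t / (1 + u * cos t))
        ((sin t * (1 + u * cos t) - u * sin t * cos t) / (1 + u * cos t) ^ 2) u := by
      have a1 := (hasDerivAt_id u).mul_const (sin t)
      have a2 := ((hasDerivAt_id u).mul_const (cos t)).const_add 1
      refine HasDerivAt.congr_deriv (a1.div a2 hp.ne') ?_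
      simp
    have := ((d1.log hq.ne').const_mul A).add (d2.arctan.const_mul (B / sin t))
    refine HasDerivAt.congr_deriv this ?_
    have e : 1 + (u * sin t / (1 + u * cos t)) ^ 2
        = (u ^ 2 + 2 * cos t * u + 1) / (1 + u * cos t) ^ 2 := by
      field_simp
      linear_combination u ^ 2 * hsc
    rw [e]
    field_simp
    ring
  rw [intervalIntegral.integral_eq_sub_of_hasDerivAt hd]
  · have ht : arctan (sin t / (1 + cos t)) = t / 2 := by
      have : sin t / (1 + cos t) = tan (t / 2) := by
        have hc2 : 0 < cos (t / 2) := cos_pos_of_mem_Ioo ⟨by linarith, by linarith⟩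
        have e1 : sin t = 2 * sin (t / 2) * cos (t / 2) := by rw [← sin_two_mul]; ring_nf
        have e2 : cos t = 2 * cos (t / 2) ^ 2 - 1 := by rw [← cos_two_mul]; ring_nf
        rw [tan_eq_sin_div_cos, e1, e2]
        field_simp
        ring
      rw [this, arctan_tan (by linarith) (by linarith)]
    simp [ht]
    ring_nf
  · apply Continuous.intervalIntegrable
    exact Continuous.div₀ (by fun_prop) (by fun_prop) (fun u => (quad_pos h0 h1 u).ne')

open Real in
lemma I_eq : ∫ u in (0:ℝ)..1, 5 * u ^ 3 / Phi5 u =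
    -((π / 2) * √(1 + 2 / √5)) + (5 / 4) * log 5 + (√5 / 4) * log ((3 + √5) / 2) := by
  have h5 : √5 ^ 2 = 5 := Real.sq_sqrt (by norm_num)
  have h5p : 0 < √5 := by positivity
  have h53 : √5 < 3 := by nlinarith
  have hpi := pi_pos
  have c1 : cos (π / 5) = (1 + √5) / 4 := cos_pi_div_five
  have c2' : cos (2 * (π / 5)) = (√5 - 1) / 4 := by
    rw [cos_two_mul, c1]; linear_combination h5 / 8
  have c2 : cos (3 * π / 5) = (1 - √5) / 4 := by
    rw [show 3 * π / 5 = π - 2 * (π / 5) by ring, cos_pi_sub, c2']; ring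
  have s2 : sin (3 * π / 5) = sin (π / 5) * ((1 + √5) / 2) := by
    rw [show 3 * π / 5 = π - 2 * (π / 5) by ring, sin_pi_sub, sin_two_mul, c1]; ring
  have sp : 0 < sin (π / 5) := sin_pos_of_pos_of_lt_pi (by linarith) (by linarith)
  have ss : sin (π / 5) ^ 2 = (5 - √5) / 8 := by
    have := sin_sq_add_cos_sq (π / 5)
    rw [c1] at this
    linear_combination this - h5 / 16
  have q1 := quad_pos (t := π / 5) (by linarith) (by linarith)
  have q2 := quad_pos (t := 3 * π / 5) (by linarith) (by linarith)
  have i1 := quad_int (t := π / 5) (by linarith) (by linarith) ((5 + √5) / 4) ((√5 - 5) / 4)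
  have i2 := quad_int (t := 3 * π / 5) (by linarith) (by linarith) ((5 - √5) / 4) ((-√5 - 5) / 4)
  have e : ∀ u : ℝ, 5 * u ^ 3 / Phi5 u =
      ((5 + √5) / 4 * (2 * u + 2 * cos (π / 5)) + (√5 - 5) / 4)
        / (u ^ 2 + 2 * cos (π / 5) * u + 1) +
      ((5 - √5) / 4 * (2 * u + 2 * cos (3 * π / 5)) + (-√5 - 5) / 4)
        / (u ^ 2 + 2 * cos (3 * π / 5) * u + 1) := by
    intro u
    have hP : Phi5 u = (u ^ 2 + 2 * cos (π / 5) * u + 1) * (u ^ 2 + 2 * cos (3 * π / 5) * u + 1) := by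
      rw [c1, c2, Phi5]; linear_combination u ^ 2 / 4 * h5
    rw [div_add_div _ _ (q1 u).ne' (q2 u).ne', hP]
    congr 1
    rw [c1, c2]
    ring_nf
    simp only [h5, show √5 ^ 3 = 5 * √5 by rw [pow_succ, h5]]
    ring
  simp_rw [e]
  rw [intervalIntegral.integral_add, i1, i2, c1, c2, s2]
  · have l1 : log 5 = log (2 + 2 * ((1 + √5) / 4)) + log (2 + 2 * ((1 - √5) / 4)) := by
      rw [← log_mul (by positivity) (by linarith)]
      congr 1; linear_combination (1/4) * h5
    have l2 : log ((3 + √5) / 2) = log (2 + 2 * ((1 + √5) / 4)) - log (2 + 2 * ((1 - √5) / 4)) := by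
      have hne : 2 + 2 * ((1 - √5) / 4) ≠ 0 := by linarith
      rw [← log_div (by positivity) hne]
      congr 1
      rw [eq_div_iff hne]; linear_combination (-1/4) * h5
    have r : √(1 + 2 / √5) = (1 + √5) / 4 / sin (π / 5) := by
      rw [sqrt_eq_iff_mul_self_eq (by positivity) (by positivity)]
      have : (5 - √5) ≠ 0 := by linarith
      rw [← sq, div_pow, ss]
      field_simp
      ring_nf
      simp only [h5, show √5 ^ 3 = 5 * √5 by rw [pow_succ, h5]]
      ring
    rw [r, l1, l2]
    field_simp
    ring_nf
    simp only [h5, show √5 ^ 3 = 5 * √5 by rw [pow_succ, h5]]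
    ring
  · apply Continuous.intervalIntegrable
    exact Continuous.div₀ (by fun_prop) (by fun_prop) (fun u => (q1 u).ne')
  · apply Continuous.intervalIntegrable
    exact Continuous.div₀ (by fun_prop) (by fun_prop) (fun u => (q2 u).ne')

theorem digamma_four_fifths :
    digamma (4 / 5) =
      -Real.eulerMascheroniConstant
        + (Real.pi / 2) * Real.sqrt (1 + 2 / Real.sqrt 5)
        - (5 / 4) * Real.log 5
        - (Real.sqrt 5 / 4) * Real.log ((3 + Real.sqrt 5) / 2) := by
  have h1 := digamma_lim (4 / 5) (by norm_num) (by norm_num)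
  simp_rw [sum_eq] at h1
  have h2 := J_tendsto.const_sub (∫ u in (0:ℝ)..1, 5 * u ^ 3 / Phi5 u)
  have h3 := tendsto_nhds_unique h1 h2
  rw [I_eq] at h3
  linarith
end

section
/- ψ(3/8) = −γ − (√2 − 1)·(π/2) − 4·ln 2 + √2·ln(1 + √2), where ψ is the digamma function and γ is the Euler–Mascheroni constant. -/
lemma dg_hasDerivAt {x : ℝ} (hx : 0 < x) :
    HasDerivAt (fun y => Real.log (Real.Gamma y)) (digamma x) x := by
  have h := (Real.differentiableAt_Gamma (s := x)
    (fun m => by have : (0:ℝ) ≤ m := m.cast_nonneg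
                 intro h; linarith)).hasDerivAt
  exact h.log (Real.Gamma_pos_of_pos hx).ne'

lemma dg_rec {x : ℝ} (hx : 0 < x) : digamma (x + 1) = digamma x + 1 / x := by
  have h1 : HasDerivAt (fun y => Real.log (Real.Gamma (y + 1))) (digamma (x + 1)) x :=
    (dg_hasDerivAt (x := x + 1) (by linarith)).comp_add_const x 1
  have h2 : HasDerivAt (fun y => Real.log (Real.Gamma y) + Real.log y) (digamma x + x⁻¹) x :=
    (dg_hasDerivAt hx).add (Real.hasDerivAt_log hx.ne')
  have h3 : (fun y => Real.log (Real.Gamma (y + 1))) =ᶠ[nhds x]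
      (fun y => Real.log (Real.Gamma y) + Real.log y) := by
    filter_upwards [eventually_gt_nhds hx] with y hy
    rw [Real.Gamma_add_one hy.ne', Real.log_mul hy.ne' (Real.Gamma_pos_of_pos hy).ne', add_comm]
  rw [one_div]
  exact h1.unique (h2.congr_of_eventuallyEq h3)

lemma dg_dup {x : ℝ} (hx : 0 < x) :
    digamma x + digamma (x + 1 / 2) = 2 * digamma (2 * x) - 2 * Real.log 2 := by
  have h1 : HasDerivAt (fun y => Real.log (Real.Gamma y) + Real.log (Real.Gamma (y + 1 / 2)))
      (digamma x + digamma (x + 1 / 2)) x :=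
    (dg_hasDerivAt hx).add ((dg_hasDerivAt (x := x + 1 / 2) (by linarith)).comp_add_const x (1 / 2))
  have h0 : HasDerivAt (fun y : ℝ => 2 * y) 2 x := by
    simpa using (hasDerivAt_id x).const_mul 2
  have h2 : HasDerivAt (fun y => Real.log (Real.Gamma (2 * y)) + (1 - 2 * y) * Real.log 2
      + Real.log (Real.sqrt Real.pi)) (digamma (2 * x) * 2 + (-2) * Real.log 2) x :=
    ((HasDerivAt.comp x (dg_hasDerivAt (x := 2 * x) (by linarith)) h0).add
      ((h0.const_sub 1).mul_const _)).add_const _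
  have h3 : (fun y => Real.log (Real.Gamma y) + Real.log (Real.Gamma (y + 1 / 2))) =ᶠ[nhds x]
      (fun y => Real.log (Real.Gamma (2 * y)) + (1 - 2 * y) * Real.log 2
      + Real.log (Real.sqrt Real.pi)) := by
    filter_upwards [eventually_gt_nhds hx] with y hy
    have a1 := (Real.Gamma_pos_of_pos hy).ne'
    have a2 := (Real.Gamma_pos_of_pos (by linarith : 0 < y + 1 / 2)).ne'
    have a3 := (Real.Gamma_pos_of_pos (by linarith : 0 < 2 * y)).ne'
    have a4 : Real.sqrt Real.pi ≠ 0 := (Real.sqrt_pos.mpr Real.pi_pos).ne'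
    have a5 : (2:ℝ) ^ (1 - 2 * y) ≠ 0 := (Real.rpow_pos_of_pos two_pos _).ne'
    rw [← Real.log_mul a1 a2, Real.Gamma_mul_Gamma_add_half,
      Real.log_mul (mul_ne_zero a3 a5) a4, Real.log_mul a3 a5, Real.log_rpow two_pos]
  have := h1.unique (h2.congr_of_eventuallyEq h3)
  linarith

lemma dg_refl {x : ℝ} (hx : 0 < x) (hx1 : x < 1) :
    digamma (1 - x) - digamma x
      = Real.pi * (Real.cos (Real.pi * x) / Real.sin (Real.pi * x)) := by
  have hs : ∀ y : ℝ, 0 < y → y < 1 → 0 < Real.sin (Real.pi * y) := fun y h0 h1 =>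
    Real.sin_pos_of_pos_of_lt_pi (mul_pos Real.pi_pos h0) (by nlinarith [Real.pi_pos])
  have h0 : HasDerivAt (fun y : ℝ => 1 - y) (-1) x := by
    simpa using (hasDerivAt_id x).const_sub 1
  have h1 : HasDerivAt (fun y => Real.log (Real.Gamma y) + Real.log (Real.Gamma (1 - y)))
      (digamma x + digamma (1 - x) * (-1)) x :=
    (dg_hasDerivAt hx).add
      (HasDerivAt.comp x (dg_hasDerivAt (x := 1 - x) (by linarith)) h0)
  have h4 : HasDerivAt (fun y : ℝ => Real.pi * y) Real.pi x := by
    simpa using (hasDerivAt_id x).const_mul Real.pi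
  have h2 : HasDerivAt (fun y => Real.log Real.pi - Real.log (Real.sin (Real.pi * y)))
      (-(Real.cos (Real.pi * x) * Real.pi / Real.sin (Real.pi * x))) x :=
    ((h4.sin).log (hs x hx hx1).ne').const_sub _
  have h3 : (fun y => Real.log (Real.Gamma y) + Real.log (Real.Gamma (1 - y))) =ᶠ[nhds x]
      (fun y => Real.log Real.pi - Real.log (Real.sin (Real.pi * y))) := by
    filter_upwards [eventually_gt_nhds hx, eventually_lt_nhds hx1] with y hy hy1
    have a1 := (Real.Gamma_pos_of_pos hy).ne'
    have a2 := (Real.Gamma_pos_of_pos (by linarith : 0 < 1 - y)).ne'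
    rw [← Real.log_mul a1 a2, Real.Gamma_mul_Gamma_one_sub,
      Real.log_div Real.pi_pos.ne' (hs y hy hy1).ne']
  have := h1.unique (h2.congr_of_eventuallyEq h3)
  have e : Real.pi * (Real.cos (Real.pi * x) / Real.sin (Real.pi * x)) =
    Real.cos (Real.pi * x) * Real.pi / Real.sin (Real.pi * x) := by ring
  rw [e]; linarith

lemma dg_mono {x y : ℝ} (hx : 0 < x) (hxy : x < y) : digamma x ≤ digamma y := by
  have hc : ConvexOn ℝ (Set.Ioi 0) (fun y => Real.log (Real.Gamma y)) :=
    Real.convexOn_log_Gamma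
  have hy := hx.trans hxy
  have h1 := hc.deriv_le_slope (Set.mem_Ioi.2 hx) (Set.mem_Ioi.2 hy) hxy
    (dg_hasDerivAt hx).differentiableAt
  have h2 := hc.slope_le_deriv (Set.mem_Ioi.2 hx) (Set.mem_Ioi.2 hy) hxy
    (dg_hasDerivAt hy).differentiableAt
  rw [(dg_hasDerivAt hx).deriv] at h1
  rw [(dg_hasDerivAt hy).deriv] at h2
  exact h1.trans h2

noncomputable def dgD (x : ℝ) : ℝ :=
  digamma (x + 1 / 8) + digamma (x + 7 / 8) - digamma (x + 3 / 8) - digamma (x + 5 / 8)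

noncomputable def dgI (n : ℕ) : ℝ := ∫ t in (0:ℝ)..1, t ^ (8 * n) * ((1 - t ^ 2) / (1 + t ^ 4))

lemma dgD_bound {x : ℝ} (hx : 0 ≤ x) : |dgD x| ≤ 1 / (x + 1 / 8) := by
  have h1 := dg_mono (x := x + 1 / 8) (y := x + 3 / 8) (by linarith) (by linarith)
  have h2 := dg_mono (x := x + 3 / 8) (y := x + 5 / 8) (by linarith) (by linarith)
  have h3 := dg_mono (x := x + 5 / 8) (y := x + 7 / 8) (by linarith) (by linarith)
  have h4 := dg_mono (x := x + 7 / 8) (y := x + 1 / 8 + 1) (by linarith) (by linarith)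
  rw [dg_rec (by linarith)] at h4
  unfold dgD
  rw [abs_le]; constructor <;> linarith

lemma dgD_step (n : ℕ) : dgD ((n + 1 : ℕ) : ℝ) = dgD n + (1 / (n + 1 / 8) + 1 / (n + 7 / 8)
    - 1 / (n + 3 / 8) - 1 / ((n : ℝ) + 5 / 8)) := by
  have hn : (0:ℝ) ≤ n := n.cast_nonneg
  unfold dgD
  push_cast
  rw [show (n:ℝ) + 1 + 1 / 8 = n + 1 / 8 + 1 by ring, show (n:ℝ) + 1 + 3 / 8 = n + 3 / 8 + 1 by ring,
    show (n:ℝ) + 1 + 5 / 8 = n + 5 / 8 + 1 by ring, show (n:ℝ) + 1 + 7 / 8 = n + 7 / 8 + 1 by ring,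
    dg_rec (by linarith), dg_rec (by linarith), dg_rec (by linarith), dg_rec (by linarith)]
  ring

lemma dgI_cont (n : ℕ) : Continuous (fun t : ℝ => t ^ (8 * n) * ((1 - t ^ 2) / (1 + t ^ 4))) := by
  have : ∀ t : ℝ, 1 + t ^ 4 ≠ 0 := fun t => by positivity
  fun_prop (disch := exact this)

lemma dgI_step (n : ℕ) : dgI n - dgI (n + 1) = (1 / (n + 1 / 8) + 1 / (n + 7 / 8)
    - 1 / (n + 3 / 8) - 1 / ((n : ℝ) + 5 / 8)) / 8 := by
  have hn : (0:ℝ) ≤ n := n.cast_nonneg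
  unfold dgI
  rw [← intervalIntegral.integral_sub ((dgI_cont n).intervalIntegrable _ _)
    ((dgI_cont (n + 1)).intervalIntegrable _ _)]
  have e : ∀ t : ℝ, t ^ (8 * n) * ((1 - t ^ 2) / (1 + t ^ 4))
      - t ^ (8 * (n + 1)) * ((1 - t ^ 2) / (1 + t ^ 4))
      = t ^ (8 * n) - t ^ (8 * n + 2) - t ^ (8 * n + 4) + t ^ (8 * n + 6) := fun t => by
    have : 1 + t ^ 4 ≠ 0 := by positivity
    field_simp
    ring
  simp_rw [e]
  have c : ∀ k : ℕ, IntervalIntegrable (fun t : ℝ => t ^ k) MeasureTheory.volume 0 1 :=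
    fun k => (continuous_pow k).intervalIntegrable _ _
  rw [intervalIntegral.integral_add (((c _).sub (c _)).sub (c _)) (c _),
    intervalIntegral.integral_sub ((c _).sub (c _)) (c _),
    intervalIntegral.integral_sub (c _) (c _)]
  simp only [integral_pow]
  push_cast
  simp only [one_pow, ne_eq, Nat.add_eq_zero_iff, not_false_eq_true, zero_pow,
    OfNat.ofNat_ne_zero, one_ne_zero, and_false, sub_zero]
  field_simp
  ring

lemma dgI_bound (n : ℕ) : |dgI n| ≤ 1 / (8 * n + 1) := by
  have h1 : 0 ≤ dgI n := by
    apply intervalIntegral.integral_nonneg zero_le_one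
    intro t ht
    have : 0 ≤ 1 - t ^ 2 := by nlinarith [ht.1, ht.2]
    have := ht.1
    positivity
  rw [abs_of_nonneg h1]
  have h2 : dgI n ≤ ∫ t in (0:ℝ)..1, t ^ (8 * n) := by
    apply intervalIntegral.integral_mono_on zero_le_one ((dgI_cont n).intervalIntegrable _ _)
      ((continuous_pow _).intervalIntegrable _ _)
    intro t ht
    have h0 : 0 ≤ t ^ (8 * n) := pow_nonneg ht.1 _
    apply mul_le_of_le_one_right h0
    rw [div_le_one (by positivity)]
    nlinarith [sq_nonneg t, sq_nonneg (t ^ 2)]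
  refine h2.trans (le_of_eq ?_)
  simp [integral_pow]

lemma dgD_add (n : ℕ) : dgD n + 8 * dgI n = dgD 0 + 8 * dgI 0 := by
  induction n with
  | zero => simp
  | succ n ih =>
    have h1 := dgD_step n
    have h2 := dgI_step n
    linarith

lemma dgD_zero : dgD 0 = - 8 * dgI 0 := by
  suffices h : dgD 0 + 8 * dgI 0 = 0 by linarith
  by_contra hne
  have hpos := abs_pos.mpr hne
  obtain ⟨n, hn⟩ := exists_nat_gt (16 / |dgD 0 + 8 * dgI 0|)
  have hn0 : (0:ℝ) < n := lt_trans (by positivity) hn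
  rw [div_lt_iff₀ hpos] at hn
  have h1 := dgD_bound hn0.le
  have h2 := dgI_bound n
  have h3 : 1 / ((n:ℝ) + 1 / 8) ≤ 1 / n := one_div_le_one_div_of_le hn0 (by linarith)
  have h4 : 1 / (8 * (n:ℝ) + 1) ≤ 1 / n := one_div_le_one_div_of_le hn0 (by linarith)
  have h5 : |dgD 0 + 8 * dgI 0| ≤ 9 * (1 / n) := by
    rw [← dgD_add n]
    refine (abs_add_le _ _).trans ?_
    rw [abs_mul, abs_of_pos (by norm_num : (0:ℝ) < 8)]
    linarith
  have h6 := mul_le_mul_of_nonneg_left h5 hn0.le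
  have h7 : (n:ℝ) * (9 * (1 / n)) = 9 := by field_simp
  linarith

lemma dgI_zero : dgI 0 = Real.log (1 + Real.sqrt 2) / Real.sqrt 2 := by
  set s := Real.sqrt 2 with hs
  have hs2 : s ^ 2 = 2 := Real.sq_sqrt (by norm_num)
  have hs0 : 0 < s := Real.sqrt_pos.mpr (by norm_num)
  have p1 : ∀ t : ℝ, 0 < t ^ 2 + s * t + 1 := fun t => by nlinarith [sq_nonneg (2 * t + s)]
  have p2 : ∀ t : ℝ, 0 < t ^ 2 - s * t + 1 := fun t => by nlinarith [sq_nonneg (2 * t - s)]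
  have hd : ∀ t : ℝ, HasDerivAt (fun t => (Real.log (t ^ 2 + s * t + 1)
      - Real.log (t ^ 2 - s * t + 1)) / (2 * s))
      (t ^ (8 * 0) * ((1 - t ^ 2) / (1 + t ^ 4))) t := fun t => by
    have a0 : HasDerivAt (fun t : ℝ => s * t) s t := by
      simpa using (hasDerivAt_id t).const_mul s
    have a1 : HasDerivAt (fun t : ℝ => t ^ 2) (2 * t) t := by simpa using hasDerivAt_pow 2 t
    have b1 := (((a1.add a0).add_const 1).log (p1 t).ne').sub
      (((a1.sub a0).add_const 1).log (p2 t).ne')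
    refine (b1.div_const (2 * s)).congr_deriv ?_
    have q1 := (p1 t).ne'
    have q2 := (p2 t).ne'
    have e : 1 + t ^ 4 = (t ^ 2 + s * t + 1) * (t ^ 2 - s * t + 1) := by
      linear_combination t ^ 2 * hs2
    rw [e]
    simp only [Pi.add_apply, Pi.sub_apply, mul_zero, pow_zero, one_mul]
    rw [div_sub_div _ _ q1 q2, div_div,
      div_eq_div_iff (mul_ne_zero (mul_ne_zero q1 q2) (by positivity)) (mul_ne_zero q1 q2)]
    ring
  unfold dgI
  rw [intervalIntegral.integral_eq_sub_of_hasDerivAt (fun t _ => hd t)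
    ((dgI_cont 0).intervalIntegrable _ _)]
  have p3 := p2 1
  have e : (1:ℝ) ^ 2 + s * 1 + 1 = (1 + s) ^ 2 * (1 ^ 2 - s * 1 + 1) := by
    linear_combination s * hs2
  rw [e, Real.log_mul (by positivity) p3.ne', Real.log_pow]
  simp
  field_simp

theorem digamma_three_eighths :
    digamma (3 / 8) =
      -Real.eulerMascheroniConstant - (Real.sqrt 2 - 1) * (Real.pi / 2)
        - 4 * Real.log 2 + Real.sqrt 2 * Real.log (1 + Real.sqrt 2) := by
  have hD := dgD_zero
  rw [dgI_zero] at hD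
  unfold dgD at hD
  simp only [zero_add] at hD
  set s := Real.sqrt 2 with hs
  have hs2 : s ^ 2 = 2 := Real.sq_sqrt (by norm_num)
  have hs0 : 0 < s := Real.sqrt_pos.mpr (by norm_num)
  have hL : -8 * (Real.log (1 + s) / s) = -4 * s * Real.log (1 + s) := by
    field_simp
    linear_combination 4 * Real.log (1 + s) * hs2
  rw [hL] at hD
  have d1 := dg_dup (x := 1 / 2) (by norm_num)
  have d2 := dg_dup (x := 1 / 4) (by norm_num)
  have d3 := dg_dup (x := 3 / 8) (by norm_num)
  have r1 := dg_refl (x := 1 / 4) (by norm_num) (by norm_num)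
  have r2 := dg_refl (x := 1 / 8) (by norm_num) (by norm_num)
  have r3 := dg_refl (x := 3 / 8) (by norm_num) (by norm_num)
  have g1 : digamma 1 = -Real.eulerMascheroniConstant := by
    unfold digamma
    rw [Real.hasDerivAt_Gamma_one.deriv, Real.Gamma_one, div_one]
  have hs8 : 0 < Real.sin (Real.pi / 8) :=
    Real.sin_pos_of_pos_of_lt_pi (by positivity) (by linarith [Real.pi_pos])
  have hc8 : 0 < Real.cos (Real.pi / 8) :=
    Real.cos_pos_of_mem_Ioo ⟨by linarith [Real.pi_pos], by linarith [Real.pi_pos]⟩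
  have t1 : Real.cos (Real.pi * (1 / 4)) / Real.sin (Real.pi * (1 / 4)) = 1 := by
    rw [mul_one_div, Real.cos_pi_div_four, Real.sin_pi_div_four, div_self (by positivity)]
  have dc : Real.cos (Real.pi / 8) ^ 2 - Real.sin (Real.pi / 8) ^ 2 = s / 2 := by
    rw [← Real.cos_two_mul', show 2 * (Real.pi / 8) = Real.pi / 4 by ring, Real.cos_pi_div_four]
  have ds : 2 * Real.sin (Real.pi / 8) * Real.cos (Real.pi / 8) = s / 2 := by
    rw [← Real.sin_two_mul, show 2 * (Real.pi / 8) = Real.pi / 4 by ring, Real.sin_pi_div_four]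
  have du := Real.sin_sq_add_cos_sq (Real.pi / 8)
  have key : Real.cos (Real.pi / 8) = (1 + s) * Real.sin (Real.pi / 8) := by
    have : Real.cos (Real.pi / 8) * Real.cos (Real.pi / 8)
        = (1 + s) * Real.sin (Real.pi / 8) * Real.cos (Real.pi / 8) := by
      linear_combination (1 / 2) * dc + (1 / 2) * du - (1 + s) / 2 * ds - (1 / 4) * hs2
    exact mul_right_cancel₀ hc8.ne' this
  have t2 : Real.cos (Real.pi * (1 / 8)) / Real.sin (Real.pi * (1 / 8)) = 1 + s := by
    rw [mul_one_div, div_eq_iff hs8.ne', key]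
  have t3 : Real.cos (Real.pi * (3 / 8)) / Real.sin (Real.pi * (3 / 8)) = s - 1 := by
    rw [show Real.pi * (3 / 8) = Real.pi / 2 - Real.pi / 8 by ring, Real.cos_pi_div_two_sub,
      Real.sin_pi_div_two_sub, div_eq_iff hc8.ne', key]
    linear_combination -Real.sin (Real.pi / 8) * hs2
  rw [t1] at r1
  rw [t2] at r2
  rw [t3] at r3
  norm_num at d1 d2 d3 r1 r2 r3
  rw [g1] at d1
  linarith
end
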